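/- Let d ≥ 3 and let D ⊂ ℝ^d be a convex domain. Then h_D(x,v) ≤ 2 g_D(x,v) for all x ∈ D and v ∈ ℝ^d, and H_D(x,y) ≤ 2 ρ_D(x,y) for all x, y ∈ D. -/

import Mathlib

/-!
The argument rests on comparing `D` with its supporting half-spaces. If `D ⊆ {l < c}` and `f` is a
conformal harmonic disk in `D` with `f 0 = x` and `f_x 0 = r v`, then `c - l ∘ f` is a positive
harmonic function on the disk, hence the real part of a holomorphic function with values in the
right half-plane, and the Schwarz lemma gives `r |l v| ≤ 2 (c - l x)`. Taking the infimum over disks,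
`|l v| ≤ 2 (c - l x) g_D(x, v)` (`abs_le_minMetric`).

At a finite chord endpoint `b = x + s v`, a supporting functional has `c - l x = s l(v)`, so
`1 / s ≤ 2 g_D(x, v)`; averaging over the two endpoints gives the infinitesimal inequality.

Along a piecewise `C¹` curve in `D` the same bound controls the derivative of `log (c - l (γ t))`, so
this logarithm varies by at most twice the minimal length (`abs_log_sub_log_le`). For the supporting
half-spaces at the two ends of the chord through `x` and `y` its variation is the logarithm of one of
the two ratios in the Hilbert cross-ratio, and the half-sum is `H_D(x, y)`.

The length is a Bochner integral, so integrability has to be shown. Flat disks give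
`g_D(x, v) ≤ ‖v‖ / δ` when `ball x δ ⊆ D`, hence boundedness along curves. Measurability follows from
upper semicontinuity of `g_D` (`isOpen_minMetric_lt`): a disk through `(x, v)`, slightly shrunk, can
be moved by a similarity close to the identity to a disk through any nearby `(x', v')` without
leaving `D`.
-/

open scoped RealInnerProductSpace ENNReal
open Metric Set Filter

noncomputable section

/-- Euclidean space `ℝ^d`. -/
abbrev Euc (d : ℕ) := EuclideanSpace ℝ (Fin d)

/-- The open unit disk in `ℝ²`. -/
def unitDisk : Set (Euc 2) := Metric.ball 0 1

/-- Partial derivative of `f` at `z` in the `i`-th coordinate direction. -/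
def pd {d : ℕ} (i : Fin 2) (f : Euc 2 → Euc d) (z : Euc 2) : Euc d :=
  fderiv ℝ f z (EuclideanSpace.single i 1)

/-- `f` is a conformal harmonic map on the unit disk: it is `C²`, its (vector)
Laplacian vanishes (equivalently, every component is harmonic), and at each point
its two partial derivatives are orthogonal and of equal norm. -/
def ConformalHarmonicOnDisk {d : ℕ} (f : Euc 2 → Euc d) : Prop :=
  ContDiffOn ℝ 2 f unitDisk ∧
  (∀ z ∈ unitDisk,
    fderiv ℝ (pd 0 f) z (EuclideanSpace.single 0 1)
      + fderiv ℝ (pd 1 f) z (EuclideanSpace.single 1 1) = 0) ∧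
  (∀ z ∈ unitDisk, ‖pd 0 f z‖ = ‖pd 1 f z‖ ∧ ⟪pd 0 f z, pd 1 f z⟫ = 0)

/-- The minimal (Forstnerič–Kalaj) metric of a domain `D ⊆ ℝ^d`:
`g_D(x,v) = inf {1/r : r > 0, f ∈ CH(𝔻, D), f 0 = x, f_x 0 = r • v}`. -/
def minMetric {d : ℕ} (D : Set (Euc d)) (x v : Euc d) : ℝ :=
  sInf {c : ℝ | ∃ r : ℝ, 0 < r ∧ c = 1 / r ∧
    ∃ f : Euc 2 → Euc d, ConformalHarmonicOnDisk f ∧ (∀ z ∈ unitDisk, f z ∈ D) ∧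
      f 0 = x ∧ pd 0 f 0 = r • v}

/-- `γ` is a piecewise `C¹` curve on `[a, b]`. -/
def PiecewiseC1On {d : ℕ} (γ : ℝ → Euc d) (a b : ℝ) : Prop :=
  ContinuousOn γ (Set.Icc a b) ∧
  ∃ (n : ℕ) (t : Fin (n + 2) → ℝ), Monotone t ∧ t 0 = a ∧ t (Fin.last (n + 1)) = b ∧
    ∀ i : Fin (n + 1), ContDiffOn ℝ 1 γ (Set.Icc (t i.castSucc) (t i.succ))

/-- The minimal pseudodistance `ρ_D`: infimum of minimal lengths of piecewise `C¹`
curves in `D` joining `x` to `y`. -/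
def minDist {d : ℕ} (D : Set (Euc d)) (x y : Euc d) : ℝ :=
  sInf {L : ℝ | ∃ γ : ℝ → Euc d, PiecewiseC1On γ 0 1 ∧
    (∀ t ∈ Set.Icc (0:ℝ) 1, γ t ∈ D) ∧ γ 0 = x ∧ γ 1 = y ∧
    L = ∫ t in (0:ℝ)..(1:ℝ), minMetric D (γ t) (deriv γ t)}

/-- The Gromov product `(x|y)_o` with respect to the minimal pseudodistance of `D`. -/
def gromovProd {d : ℕ} (D : Set (Euc d)) (o x y : Euc d) : ℝ :=
  (minDist D x o + minDist D y o - minDist D x y) / 2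

/-- `D` is hyperbolic: the minimal pseudodistance is a genuine distance. -/
def MinHyperbolic {d : ℕ} (D : Set (Euc d)) : Prop :=
  ∀ x ∈ D, ∀ y ∈ D, x ≠ y → 0 < minDist D x y

/-- The Hessian quadratic form of `u` at `x` in direction `v`. -/
def hessQ {d : ℕ} (u : Euc d → ℝ) (x v : Euc d) : ℝ :=
  fderiv ℝ (fun y => fderiv ℝ u y v) x v

/-- `D` is a bounded domain with `C²` boundary, described by a `C²` defining
function `u` on a neighborhood `U` of `∂D` with nonvanishing differential. -/
def IsC2BoundedDomain {d : ℕ} (D : Set (Euc d)) : Prop :=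
  IsOpen D ∧ IsConnected D ∧ Bornology.IsBounded D ∧
  ∃ (U : Set (Euc d)) (u : Euc d → ℝ), IsOpen U ∧ frontier D ⊆ U ∧ ContDiffOn ℝ 2 u U ∧
    D ∩ U = {x | x ∈ U ∧ u x < 0} ∧ frontier D = {x | x ∈ U ∧ u x = 0} ∧
    ∀ x ∈ frontier D, fderiv ℝ u x ≠ 0

/-- `D` is a bounded strongly minimally convex domain: it has a `C²` defining function
which is strongly minimally plurisubharmonic near `∂D`, i.e. the trace of its Hessian
on every 2-plane (spanned by an orthonormal pair `v, w`) is strictly positive. -/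
def IsStronglyMinimallyConvex {d : ℕ} (D : Set (Euc d)) : Prop :=
  IsOpen D ∧ IsConnected D ∧ Bornology.IsBounded D ∧
  ∃ (U : Set (Euc d)) (u : Euc d → ℝ), IsOpen U ∧ frontier D ⊆ U ∧ ContDiffOn ℝ 2 u U ∧
    D ∩ U = {x | x ∈ U ∧ u x < 0} ∧ frontier D = {x | x ∈ U ∧ u x = 0} ∧
    (∀ x ∈ frontier D, fderiv ℝ u x ≠ 0) ∧
    (∀ x ∈ U, ∀ v w : Euc d, ‖v‖ = 1 → ‖w‖ = 1 → ⟪v, w⟫ = 0 →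
      0 < hessQ u x v + hessQ u x w)

/-- `D` is a bounded strongly convex domain: convex, with a `C²` defining function whose
Hessian is positive definite on the tangent space at every boundary point
(equivalently, all principal curvatures of `∂D` w.r.t. the inner normal are positive). -/
def IsStronglyConvexDomain {d : ℕ} (D : Set (Euc d)) : Prop :=
  IsOpen D ∧ IsConnected D ∧ Bornology.IsBounded D ∧ Convex ℝ D ∧
  ∃ (U : Set (Euc d)) (u : Euc d → ℝ), IsOpen U ∧ frontier D ⊆ U ∧ ContDiffOn ℝ 2 u U ∧
    D ∩ U = {x | x ∈ U ∧ u x < 0} ∧ frontier D = {x | x ∈ U ∧ u x = 0} ∧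
    (∀ x ∈ frontier D, fderiv ℝ u x ≠ 0) ∧
    (∀ ξ ∈ frontier D, ∀ w : Euc d, w ≠ 0 → fderiv ℝ u ξ w = 0 → 0 < hessQ u ξ w)

/-- For `x ∈ D` with nearest boundary point `p`, the outer unit normal direction
`n_{π(x)} = (p - x)/‖p - x‖`. -/
def nvec {d : ℕ} (x p : Euc d) : Euc d := ‖p - x‖⁻¹ • (p - x)

/-- Normal component of `v` at `x` with nearest boundary point `p`. -/
def vN {d : ℕ} (x p v : Euc d) : Euc d := ⟪v, nvec x p⟫ • nvec x p

/-- Tangential component of `v` at `x` with nearest boundary point `p`. -/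
def vT {d : ℕ} (x p v : Euc d) : Euc d := v - vN x p v

/-- The intrinsic distance `H` on the boundary `∂D`: infimum of Euclidean lengths of
piecewise `C¹` curves in `∂D` joining two boundary points. -/
def bdist {d : ℕ} (D : Set (Euc d)) (ξ η : Euc d) : ℝ :=
  sInf {L : ℝ | ∃ α : ℝ → Euc d, PiecewiseC1On α 0 1 ∧
    (∀ t ∈ Set.Icc (0:ℝ) 1, α t ∈ frontier D) ∧ α 0 = ξ ∧ α 1 = η ∧
    L = ∫ t in (0:ℝ)..(1:ℝ), ‖deriv α t‖}

/-- `h(x) = δ_D(x)^{1/2}`. -/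
def hfun {d : ℕ} (D : Set (Euc d)) (x : Euc d) : ℝ :=
  Real.sqrt (Metric.infDist x (frontier D))

/-- The length of a curve with respect to the boundary Finsler metric
`F(x,v) = ‖v_N‖/(2 δ_D(x)) + ‖v_T‖/δ_D(x)^{1/2}`. -/
def Flen {d : ℕ} (D : Set (Euc d)) (π : Euc d → Euc d) (γ : ℝ → Euc d) : ℝ :=
  ∫ t in (0:ℝ)..(1:ℝ),
    (‖vN (γ t) (π (γ t)) (deriv γ t)‖ / (2 * Metric.infDist (γ t) (frontier D))
      + ‖vT (γ t) (π (γ t)) (deriv γ t)‖ / Real.sqrt (Metric.infDist (γ t) (frontier D)))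

/-- The filling Finsler metric `F`: the boundary Finsler metric on
`N = {δ_D ≤ ε}` and `c‖v‖` elsewhere. -/
def Fmet {d : ℕ} (D : Set (Euc d)) (π : Euc d → Euc d) (ε c : ℝ) (x v : Euc d) : ℝ :=
  if Metric.infDist x (frontier D) ≤ ε then
    ‖vN x (π x) v‖ / (2 * Metric.infDist x (frontier D))
      + ‖vT x (π x) v‖ / Real.sqrt (Metric.infDist x (frontier D))
  else c * ‖v‖

/-- The intrinsic distance `d_F` associated to the filling Finsler metric `F`. -/
def dF {d : ℕ} (D : Set (Euc d)) (π : Euc d → Euc d) (ε c : ℝ) (x y : Euc d) : ℝ :=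
  sInf {L : ℝ | ∃ γ : ℝ → Euc d, PiecewiseC1On γ 0 1 ∧
    (∀ t ∈ Set.Icc (0:ℝ) 1, γ t ∈ D) ∧ γ 0 = x ∧ γ 1 = y ∧
    L = ∫ t in (0:ℝ)..(1:ℝ), Fmet D π ε c (γ t) (deriv γ t)}

/-- The hyperbolic filling distance
`d_H(x,y) = 2 log((H(π x, π y) + h(x) ∨ h(y)) / √(h(x) h(y)))`. -/
def dH {d : ℕ} (D : Set (Euc d)) (π : Euc d → Euc d) (x y : Euc d) : ℝ :=
  2 * Real.log ((bdist D (π x) (π y) + max (hfun D x) (hfun D y)) /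
    Real.sqrt (hfun D x * hfun D y))

/-- `δ̂_D(x,v)`: the supremum over 2-dimensional linear subspaces `Λ ∋ v` of the
distance (in `ℝ≥0∞`, so `∞` if `x + Λ ⊆ D`) from `x` to `(x + Λ) \ D`. -/
def deltaHat {d : ℕ} (D : Set (Euc d)) (x v : Euc d) : ℝ≥0∞ :=
  ⨆ (Λ : Submodule ℝ (Euc d)) (_ : Module.finrank ℝ Λ = 2) (_ : v ∈ Λ),
    ⨅ (y : Euc d) (_ : y - x ∈ Λ ∧ y ∉ D), edist x y

/-- The positive parameter at which the ray `t ↦ x + t • v` exits the convex domain `D`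
(equal to `0`, by the `sInf ∅ = 0` convention, when the ray stays in `D`,
i.e. when the corresponding chord endpoint is the point at infinity). -/
def chordParam {d : ℕ} (D : Set (Euc d)) (x v : Euc d) : ℝ :=
  sInf {s : ℝ | 0 < s ∧ x + s • v ∉ D}

/-- The Hilbert Finsler metric `h_D(x,v) = (‖v‖/2)(1/‖x-a‖ + 1/‖x-b‖)` of a convex
domain, with the convention `1/‖x-∞‖ = 0` (here `‖x-b‖ = chordParam D x v • ‖v‖` and
`‖x-a‖ = chordParam D x (-v) • ‖v‖`, and division by zero is zero). -/
def hilbertFinsler {d : ℕ} (D : Set (Euc d)) (x v : Euc d) : ℝ :=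
  (1/2) * (1 / chordParam D x v + 1 / chordParam D x (-v))

/- The Hilbert distance of a convex domain: for `x ≠ y`,
`H_D(x,y) = ½ log((‖x-b‖ ‖y-a‖)/(‖x-a‖ ‖y-b‖))` where `a, x, y, b` are aligned on the
chord through `x, y`, with the convention that ratios involving the point at infinity
(detected by `chordParam = 0`) are equal to `1`. -/
open Classical in
def hilbertDist {d : ℕ} (D : Set (Euc d)) (x y : Euc d) : ℝ :=
  if x = y then 0 else
    (1/2) * Real.log
      ((if chordParam D x (y - x) = 0 then 1
        else chordParam D x (y - x) / (chordParam D x (y - x) - 1)) *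
       (if chordParam D x (x - y) = 0 then 1
        else (1 + chordParam D x (x - y)) / chordParam D x (x - y)))

/-! ### Positive harmonic functions on the disk -/

/-- Schwarz lemma for the half-plane: a holomorphic function on the disk with positive real part
satisfies `|F'(0)| ≤ 2 Re F(0)`. It is the usual Schwarz lemma for the Cayley transform of `F`. -/
lemma norm_deriv_le_of_re_pos {F : ℂ → ℂ} (hF : DifferentiableOn ℂ F (ball 0 1))
    (hpos : ∀ z ∈ ball (0 : ℂ) 1, 0 < (F z).re) : ‖deriv F 0‖ ≤ 2 * (F 0).re := by
  have h0 : (0 : ℂ) ∈ ball (0 : ℂ) 1 := by simp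
  have hp0 := hpos 0 h0
  set c : ℂ := (starRingEnd ℂ) (F 0) with hc
  have hne : ∀ z ∈ ball (0 : ℂ) 1, F z + c ≠ 0 := by
    intro z hz h
    have := congrArg Complex.re h
    simp [hc] at this
    linarith [hpos z hz]
  have hφ : DifferentiableOn ℂ (fun z => (F z - F 0) / (F z + c)) (ball 0 1) :=
    (hF.sub_const _).div (hF.add_const _) hne
  have hmaps : MapsTo (fun z => (F z - F 0) / (F z + c)) (ball 0 1)
      (closedBall ((fun z => (F z - F 0) / (F z + c)) 0) 1) := by
    intro z hz
    simp only [sub_self, zero_div, mem_closedBall, dist_zero_right, norm_div]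
    refine div_le_one_of_le₀ ?_ (norm_nonneg _)
    rw [← sq_le_sq₀ (norm_nonneg _) (norm_nonneg _), ← Complex.normSq_eq_norm_sq,
      ← Complex.normSq_eq_norm_sq, Complex.normSq_apply, Complex.normSq_apply]
    simp only [hc, Complex.sub_re, Complex.sub_im, Complex.add_re, Complex.add_im,
      Complex.conj_re, Complex.conj_im]
    nlinarith [mul_pos (hpos z hz) hp0]
  have key := Complex.norm_deriv_le_one_of_mapsTo_ball hφ hmaps one_pos
  have hFd : HasDerivAt F (deriv F 0) 0 :=
    (hF.differentiableAt (ball_mem_nhds _ one_pos)).hasDerivAt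
  have hd := (hFd.sub_const (F 0)).div (hFd.add_const c) (hne 0 h0)
  have hsum : F 0 + c = ((2 * (F 0).re : ℝ) : ℂ) := by
    rw [hc, Complex.add_conj]
  have hd' : deriv (fun z => (F z - F 0) / (F z + c)) 0 = deriv F 0 / ((2 * (F 0).re : ℝ) : ℂ) := by
    have h2 : ((2 * (F 0).re : ℝ) : ℂ) ≠ 0 := by rw [← hsum]; exact hne 0 h0
    refine hd.deriv.trans ?_
    rw [hsum]
    field_simp
    ring
  rw [hd', norm_div, Complex.norm_real, Real.norm_eq_abs, abs_of_pos (by linarith),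
    div_le_one (by linarith)] at key
  exact key

/-- Gradient estimate at the centre for a positive harmonic function on the disk, which is the real
part of a holomorphic function. -/
lemma abs_fderiv_le_of_harmonic_pos {U : ℂ → ℝ}
    (hU : InnerProductSpace.HarmonicOnNhd U (ball 0 1))
    (hpos : ∀ z ∈ ball (0 : ℂ) 1, 0 < U z) : |fderiv ℝ U 0 1| ≤ 2 * U 0 := by
  obtain ⟨F, hF, hFU⟩ := hU.exists_analyticOnNhd_ball_re_eq
  have h0 : (0 : ℂ) ∈ ball (0 : ℂ) 1 := by simp
  have hS := norm_deriv_le_of_re_pos hF.differentiableOn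
    (fun z hz => by rw [show (F z).re = U z from hFU hz]; exact hpos z hz)
  rw [show (F 0).re = U 0 from hFU h0] at hS
  have hFd : HasDerivAt F (deriv F 0) 0 := (hF 0 h0).differentiableAt.hasDerivAt
  have hre := Complex.reCLM.hasFDerivAt.comp 0 (hFd.hasFDerivAt.restrictScalars ℝ)
  have heq : U =ᶠ[nhds 0] (Complex.reCLM ∘ F) := by
    filter_upwards [ball_mem_nhds (0 : ℂ) one_pos] with z hz using (hFU hz).symm
  have hval : fderiv ℝ U 0 1 = (deriv F 0).re := by
    rw [heq.fderiv_eq, hre.fderiv]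
    simp
  rw [hval]
  exact (Complex.abs_re_le_norm _).trans hS

/-- The real-linear identification of `ℂ` with the Euclidean plane. -/
def cplane : ℂ →L[ℝ] Euc 2 :=
  Complex.reCLM.smulRight (EuclideanSpace.single 0 1) +
    Complex.imCLM.smulRight (EuclideanSpace.single 1 1)

lemma cplane_one : cplane 1 = EuclideanSpace.single 0 1 := by simp [cplane]

lemma cplane_I : cplane Complex.I = EuclideanSpace.single 1 1 := by simp [cplane]

lemma norm_cplane (z : ℂ) : ‖cplane z‖ = ‖z‖ := by
  rw [EuclideanSpace.norm_eq, Complex.norm_eq_sqrt_sq_add_sq]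
  simp [cplane, Fin.sum_univ_two]

lemma isOpen_unitDisk : IsOpen unitDisk := isOpen_ball

lemma pd_differentiableAt {d : ℕ} {f : Euc 2 → Euc d} (hf : ContDiffOn ℝ 2 f unitDisk) {z : Euc 2}
    (hz : z ∈ unitDisk) : DifferentiableAt ℝ (fderiv ℝ f) z :=
  ((hf.contDiffAt (isOpen_unitDisk.mem_nhds hz)).fderiv_right (m := 1)
    (by norm_num)).differentiableAt (by norm_num)

lemma fderiv_pd {d : ℕ} {f : Euc 2 → Euc d} (hf : ContDiffOn ℝ 2 f unitDisk) {z : Euc 2}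
    (hz : z ∈ unitDisk) (i : Fin 2) (w : Euc 2) :
    fderiv ℝ (pd i f) z w = fderiv ℝ (fderiv ℝ f) z w (EuclideanSpace.single i 1) := by
  have h := (pd_differentiableAt hf hz).hasFDerivAt.clm_apply
    (hasFDerivAt_const (EuclideanSpace.single i (1 : ℝ)) z)
  have h' : fderiv ℝ (pd i f) z = _ := h.fderiv
  rw [h']
  simp

lemma harmonicOnNhd_comp_cplane {d : ℕ} {f : Euc 2 → Euc d} (hf : ConformalHarmonicOnDisk f)
    (l : Euc d →L[ℝ] ℝ) (c : ℝ) :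
    InnerProductSpace.HarmonicOnNhd (fun z => c - l (f (cplane z))) (ball 0 1) := by
  obtain ⟨hC, hL, -⟩ := hf
  have hmem : ∀ z ∈ ball (0 : ℂ) 1, cplane z ∈ unitDisk := by
    intro z hz
    simpa [unitDisk, norm_cplane] using hz
  have hcd : ∀ z ∈ ball (0 : ℂ) 1, ContDiffAt ℝ 2 f (cplane z) := fun z hz =>
    hC.contDiffAt (isOpen_unitDisk.mem_nhds (hmem z hz))
  have hfd : ∀ z ∈ ball (0 : ℂ) 1, ∀ w, fderiv ℝ (fun z => c - l (f (cplane z))) z w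
      = - l (fderiv ℝ f (cplane z) (cplane w)) := by
    intro z hz w
    have h1 := ((hcd z hz).differentiableAt (by norm_num)).hasFDerivAt
    have h2 := (l.hasFDerivAt.comp z (h1.comp z cplane.hasFDerivAt)).const_sub c
    have h3 : fderiv ℝ (fun z => c - l (f (cplane z))) z = _ := h2.fderiv
    rw [h3]
    simp
  have hsd : ∀ z ∈ ball (0 : ℂ) 1, ∀ w, fderiv ℝ (fderiv ℝ (fun z => c - l (f (cplane z)))) z w w
      = - l (fderiv ℝ (fderiv ℝ f) (cplane z) (cplane w) (cplane w)) := by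
    intro z hz w
    have hU : ContDiffAt ℝ 2 (fun z => c - l (f (cplane z))) z :=
      contDiffAt_const.sub (l.contDiff.contDiffAt.comp z
        ((hcd z hz).comp z cplane.contDiff.contDiffAt))
    have hU1 : DifferentiableAt ℝ (fderiv ℝ (fun z => c - l (f (cplane z)))) z :=
      (hU.fderiv_right (m := 1) (by norm_num)).differentiableAt (by norm_num)
    have e1 : fderiv ℝ (fun y => fderiv ℝ (fun z => c - l (f (cplane z))) y w) z w
        = fderiv ℝ (fderiv ℝ (fun z => c - l (f (cplane z)))) z w w := by
      rw [(hU1.hasFDerivAt.clm_apply (hasFDerivAt_const w z)).fderiv]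
      simp
    have e2 : (fun y => fderiv ℝ (fun z => c - l (f (cplane z))) y w) =ᶠ[nhds z]
        fun y => - l (fderiv ℝ f (cplane y) (cplane w)) := by
      filter_upwards [isOpen_ball.mem_nhds hz] with y hy using hfd y hy w
    rw [← e1, e2.fderiv_eq]
    have h4 := (pd_differentiableAt hC (hmem z hz)).hasFDerivAt.comp z cplane.hasFDerivAt
    have h5 := h4.clm_apply (hasFDerivAt_const (cplane w) z)
    have h6 := (l.hasFDerivAt.comp z h5).neg
    have h7 : fderiv ℝ (fun y => - l (fderiv ℝ f (cplane y) (cplane w))) z = _ := h6.fderiv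
    rw [h7]
    simp
  intro z hz
  refine ⟨contDiffAt_const.sub (l.contDiff.contDiffAt.comp z
        ((hcd z hz).comp z cplane.contDiff.contDiffAt)), ?_⟩
  filter_upwards [isOpen_ball.mem_nhds hz] with y hy
  rw [InnerProductSpace.laplacian_eq_iteratedFDeriv_complexPlane]
  simp only [iteratedFDeriv_two_apply, Matrix.cons_val_zero, Matrix.cons_val_one]
  rw [hsd y hy, hsd y hy, cplane_one, cplane_I, ← fderiv_pd hC (hmem y hy),
    ← fderiv_pd hC (hmem y hy), ← neg_add, ← map_add, hL _ (hmem y hy)]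
  simp

/-- Gradient estimate for a conformal harmonic disk contained in the half-space `{l < c}`: the
positive harmonic function `c - l ∘ f` satisfies the Schwarz bound at the centre. -/
lemma abs_pd_le {d : ℕ} {f : Euc 2 → Euc d} (hf : ConformalHarmonicOnDisk f)
    (l : Euc d →L[ℝ] ℝ) (c : ℝ) (hlt : ∀ z ∈ unitDisk, l (f z) < c) :
    |l (pd 0 f 0)| ≤ 2 * (c - l (f 0)) := by
  have h := abs_fderiv_le_of_harmonic_pos (harmonicOnNhd_comp_cplane hf l c) (fun z hz => by
    have := hlt (cplane z) (by simpa [unitDisk, norm_cplane] using hz)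
    linarith)
  have h1 : HasFDerivAt f (fderiv ℝ f (cplane 0)) (cplane 0) :=
    ((hf.1.contDiffAt (isOpen_unitDisk.mem_nhds (by simp [unitDisk]))).differentiableAt
      (by norm_num)).hasFDerivAt
  have h2 := (l.hasFDerivAt.comp 0 (h1.comp 0 cplane.hasFDerivAt)).const_sub c
  have h3 : fderiv ℝ (fun z => c - l (f (cplane z))) 0 = _ := h2.fderiv
  rw [h3] at h
  simpa [pd, cplane_one] using h

/-! ### The minimal metric and half-spaces -/

/-- The set of admissible values `1 / r` whose infimum is `minMetric D x v`. -/
def minSet {d : ℕ} (D : Set (Euc d)) (x v : Euc d) : Set ℝ :=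
  {c : ℝ | ∃ r : ℝ, 0 < r ∧ c = 1 / r ∧
    ∃ f : Euc 2 → Euc d, ConformalHarmonicOnDisk f ∧ (∀ z ∈ unitDisk, f z ∈ D) ∧
      f 0 = x ∧ pd 0 f 0 = r • v}

lemma minMetric_eq {d : ℕ} (D : Set (Euc d)) (x v : Euc d) :
    minMetric D x v = sInf (minSet D x v) := rfl

lemma minSet_nonneg {d : ℕ} {D : Set (Euc d)} {x v : Euc d} {c : ℝ} (hc : c ∈ minSet D x v) :
    0 ≤ c := by
  obtain ⟨r, hr, rfl, -⟩ := hc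
  positivity

lemma minMetric_nonneg {d : ℕ} (D : Set (Euc d)) (x v : Euc d) : 0 ≤ minMetric D x v :=
  Real.sInf_nonneg fun _ hc => minSet_nonneg hc

lemma minMetric_le {d : ℕ} {D : Set (Euc d)} {x v : Euc d} {c : ℝ} (hc : c ∈ minSet D x v) :
    minMetric D x v ≤ c :=
  csInf_le ⟨0, fun _ h => minSet_nonneg h⟩ hc

lemma exists_orthogonal {d : ℕ} (hd : 3 ≤ d) (v : Euc d) :
    ∃ w : Euc d, ‖w‖ = ‖v‖ ∧ ⟪v, w⟫ = 0 := by
  have hK : (ℝ ∙ v)ᗮ ≠ ⊥ := by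
    intro h
    have h1 := Submodule.finrank_add_finrank_orthogonal (ℝ ∙ v)
    have h2 : Module.finrank ℝ (ℝ ∙ v) ≤ 1 := (finrank_span_le_card ({v} : Set (Euc d))).trans (by simp)
    rw [h, finrank_bot, finrank_euclideanSpace_fin] at h1
    omega
  obtain ⟨w, hw, hw0⟩ := Submodule.exists_mem_ne_zero_of_ne_bot hK
  have hvw : ⟪v, w⟫ = 0 := Submodule.mem_orthogonal_singleton_iff_inner_right.1 hw
  have hwn : ‖w‖ ≠ 0 := norm_ne_zero_iff.2 hw0
  refine ⟨(‖v‖ / ‖w‖) • w, ?_, ?_⟩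
  · rw [norm_smul, Real.norm_eq_abs, abs_of_nonneg (by positivity)]
    field_simp
  · rw [inner_smul_right, hvw, mul_zero]

/-- Flat disks: if `ball x δ ⊆ D` then the flat conformal disk of radius `r ‖v‖ ≤ δ` in a plane
containing `v` lies in `D`. -/
lemma mem_minSet_of_ball {d : ℕ} (hd : 3 ≤ d) {D : Set (Euc d)} {x v : Euc d} {δ r : ℝ}
    (hδ : 0 < δ) (hB : ball x δ ⊆ D) (hr : 0 < r) (hrv : r * ‖v‖ ≤ δ) :
    1 / r ∈ minSet D x v := by
  obtain ⟨w, hw, hvw⟩ := exists_orthogonal hd v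
  let L : Euc 2 →L[ℝ] Euc d := r • ((EuclideanSpace.proj (0 : Fin 2)).smulRight v +
    (EuclideanSpace.proj (1 : Fin 2)).smulRight w)
  have hL : ∀ z : Euc 2, L z = r • (z 0 • v + z 1 • w) := fun z => by simp [L]
  have hfd : ∀ z, fderiv ℝ (fun z => x + L z) z = L := fun z =>
    (L.hasFDerivAt.const_add x).fderiv
  have hpd : ∀ i, pd i (fun z => x + L z) = fun _ => L (EuclideanSpace.single i 1) := by
    intro i
    funext z
    simp only [pd, hfd]
  have h0 : L (EuclideanSpace.single 0 1) = r • v := by rw [hL]; simp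
  have h1 : L (EuclideanSpace.single 1 1) = r • w := by rw [hL]; simp
  refine ⟨r, hr, rfl, fun z => x + L z, ⟨?_, ?_, ?_⟩, ?_, by simp, by rw [hpd, h0]⟩
  · exact (contDiff_const.add L.contDiff).contDiffOn
  · intro z _
    simp [hpd]
  · intro z _
    simp only [hpd, h0, h1]
    refine ⟨by rw [norm_smul, norm_smul, hw], ?_⟩
    rw [inner_smul_left, inner_smul_right, hvw]
    simp
  · intro z hz
    apply hB
    have hz1 : ‖z‖ < 1 := by simpa [unitDisk] using hz
    have hn : ‖L z‖ = r * ‖v‖ * ‖z‖ := by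
      rw [hL, norm_smul, Real.norm_eq_abs, abs_of_pos hr, mul_assoc]
      congr 1
      rw [← sq_eq_sq₀ (norm_nonneg _) (by positivity), @norm_add_sq_real, inner_smul_left,
        inner_smul_right, hvw, norm_smul, norm_smul, hw, mul_pow, mul_pow, mul_pow,
        EuclideanSpace.norm_sq_eq z]
      simp [Fin.sum_univ_two]
      ring
    rw [mem_ball, dist_eq_norm, add_sub_cancel_left, hn]
    rcases (mul_nonneg hr.le (norm_nonneg v)).eq_or_lt with h | h
    · rw [← h]; simpa using hδ
    · nlinarith

lemma minSet_nonempty {d : ℕ} (hd : 3 ≤ d) {D : Set (Euc d)} (hD : IsOpen D) {x : Euc d}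
    (hx : x ∈ D) (v : Euc d) : (minSet D x v).Nonempty := by
  obtain ⟨δ, hδ, hB⟩ := Metric.isOpen_iff.1 hD x hx
  refine ⟨_, mem_minSet_of_ball hd (r := δ / (‖v‖ + 1)) hδ hB (by positivity) ?_⟩
  rw [div_mul_eq_mul_div, div_le_iff₀ (by positivity)]
  nlinarith [norm_nonneg v]

lemma minMetric_le_of_ball {d : ℕ} (hd : 3 ≤ d) {D : Set (Euc d)} {x : Euc d} (v : Euc d) {δ : ℝ}
    (hδ : 0 < δ) (hB : ball x δ ⊆ D) : minMetric D x v ≤ ‖v‖ / δ := by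
  refine le_of_forall_pos_le_add fun ε hε => ?_
  have h : 0 < ‖v‖ + δ * ε := by positivity
  refine (minMetric_le (mem_minSet_of_ball hd (r := δ / (‖v‖ + δ * ε)) hδ hB (by positivity)
    ?_)).trans (le_of_eq ?_)
  · rw [div_mul_eq_mul_div, div_le_iff₀ h]
    have : 0 < δ * ε := by positivity
    nlinarith [norm_nonneg v]
  · field_simp

/-- Half-space bound: if `D` lies in the half-space `{l < c}` then `l v` is controlled by the
minimal metric in direction `v`. -/
lemma abs_le_minMetric {d : ℕ} (hd : 3 ≤ d) {D : Set (Euc d)} (hD : IsOpen D) {x : Euc d}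
    (hx : x ∈ D) (v : Euc d) (l : Euc d →L[ℝ] ℝ) (c : ℝ) (hlt : ∀ z ∈ D, l z < c) :
    |l v| ≤ 2 * (c - l x) * minMetric D x v := by
  have hp : 0 < c - l x := by linarith [hlt x hx]
  rw [← div_le_iff₀' (by positivity)]
  refine le_csInf (minSet_nonempty hd hD hx v) ?_
  rintro _ ⟨r, hr, rfl, f, hf, hfD, rfl, hpd⟩
  have h := abs_pd_le hf l c (fun z hz => hlt _ (hfD z hz))
  rw [hpd, map_smul, smul_eq_mul, abs_mul, abs_of_pos hr] at h
  rw [div_le_div_iff₀ (by positivity) hr]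
  linarith

/-! ### Upper semicontinuity of the minimal metric -/

/-- Conformal harmonic disks are preserved by shrinking the source and applying a similarity of the
target. -/
lemma conformalHarmonic_similarity {d : ℕ} {f : Euc 2 → Euc d} (hf : ConformalHarmonicOnDisk f)
    {ρ : ℝ} (hρ : 0 < ρ) (hρ1 : ρ ≤ 1) (k : ℝ) (R : Euc d ≃ₗᵢ[ℝ] Euc d) (x x' : Euc d) :
    ConformalHarmonicOnDisk (fun z => x' + k • R (f (ρ • z) - x)) ∧
      pd 0 (fun z => x' + k • R (f (ρ • z) - x)) 0 = (ρ * k) • R (pd 0 f 0) := by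
  obtain ⟨hC, hL, hA⟩ := hf
  let A : Euc d →L[ℝ] Euc d := k • (R.toContinuousLinearEquiv : Euc d →L[ℝ] Euc d)
  let S : Euc 2 →L[ℝ] Euc 2 := ρ • ContinuousLinearMap.id ℝ (Euc 2)
  have hmem : ∀ z ∈ unitDisk, ρ • z ∈ unitDisk := by
    intro z hz
    simp only [unitDisk, mem_ball_zero_iff, norm_smul, Real.norm_eq_abs, abs_of_pos hρ] at hz ⊢
    nlinarith [norm_nonneg z]
  have hAat : ∀ z ∈ unitDisk, ContDiffAt ℝ 2 f (ρ • z) := fun z hz =>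
    hC.contDiffAt (isOpen_unitDisk.mem_nhds (hmem z hz))
  have hpd : ∀ i, ∀ z ∈ unitDisk, pd i (fun z => x' + k • R (f (ρ • z) - x)) z
      = (ρ * k) • R (pd i f (ρ • z)) := by
    intro i z hz
    have h1 : HasFDerivAt f (fderiv ℝ f (ρ • z)) (S z) :=
      ((hAat z hz).differentiableAt (by norm_num)).hasFDerivAt
    have h2 := (A.hasFDerivAt.comp z ((h1.comp z S.hasFDerivAt).sub_const x)).const_add x'
    have h3 : fderiv ℝ (fun z => x' + k • R (f (ρ • z) - x)) z = _ := h2.fderiv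
    rw [pd, h3]
    simp [A, S, pd, mul_smul, smul_comm ρ k]
  have hsd : ∀ i, ∀ z ∈ unitDisk, ∀ w, fderiv ℝ (pd i (fun z => x' + k • R (f (ρ • z) - x))) z w
      = (ρ * ρ * k) • R (fderiv ℝ (pd i f) (ρ • z) w) := by
    intro i z hz w
    have e : pd i (fun z => x' + k • R (f (ρ • z) - x)) =ᶠ[nhds z]
        fun z => ρ • A (pd i f (ρ • z)) := by
      filter_upwards [isOpen_unitDisk.mem_nhds hz] with y hy
      rw [hpd i y hy]
      simp [A, mul_smul]
    rw [e.fderiv_eq]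
    have h0 : DifferentiableAt ℝ (pd i f) (ρ • z) :=
      (pd_differentiableAt hC (hmem z hz)).clm_apply (differentiableAt_const _)
    have h1 : HasFDerivAt (pd i f) (fderiv ℝ (pd i f) (ρ • z)) (S z) := h0.hasFDerivAt
    have h2 := (A.hasFDerivAt.comp z (h1.comp z S.hasFDerivAt)).const_smul ρ
    have h3 : fderiv ℝ (fun z => ρ • A (pd i f (ρ • z))) z = _ := h2.fderiv
    rw [h3]
    simp [A, S, mul_smul, smul_comm ρ k]
  have h0 : (0 : Euc 2) ∈ unitDisk := by simp [unitDisk]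
  refine ⟨⟨?_, ?_, ?_⟩, by rw [hpd 0 0 h0, smul_zero]⟩
  · intro z hz
    have h1 : ContDiffAt ℝ 2 f (S z) := hAat z hz
    exact (contDiffAt_const.add (A.contDiff.contDiffAt.comp z
      ((h1.comp z S.contDiff.contDiffAt).sub contDiffAt_const))).contDiffWithinAt
  · intro z hz
    rw [hsd 0 z hz, hsd 1 z hz, ← smul_add, ← map_add, hL _ (hmem z hz)]
    simp
  · intro z hz
    obtain ⟨ha, hb⟩ := hA _ (hmem z hz)
    rw [hpd 0 z hz, hpd 1 z hz]
    refine ⟨by rw [norm_smul, norm_smul, R.norm_map, R.norm_map, ha], ?_⟩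
    rw [inner_smul_left, inner_smul_right, R.inner_map_map, hb]
    simp

/-- A rotation taking the direction of `v` to that of `v'`, depending continuously on `v'`
near `v`: the product of the reflections in the lines spanned by `v` and by the bisector of
`v` and `v'`. -/
def rot {d : ℕ} (v v' : Euc d) : Euc d ≃ₗᵢ[ℝ] Euc d :=
  (ℝ ∙ v).reflection.trans (ℝ ∙ (‖v‖⁻¹ • v + ‖v'‖⁻¹ • v')).reflection

lemma rot_apply_self {d : ℕ} {v v' : Euc d} (hv : v ≠ 0) (hv' : v' ≠ 0) :
    (‖v'‖ / ‖v‖) • rot v v' v = v' := by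
  have hn : ‖v‖ ≠ 0 := norm_ne_zero_iff.2 hv
  have hn' : ‖v'‖ ≠ 0 := norm_ne_zero_iff.2 hv'
  have h1 : (ℝ ∙ v).reflection v = v :=
    Submodule.reflection_mem_subspace_eq_self (Submodule.mem_span_singleton_self v)
  have h2 : (ℝ ∙ (‖v‖⁻¹ • v + ‖v'‖⁻¹ • v')).reflection (‖v‖⁻¹ • v) = ‖v'‖⁻¹ • v' := by
    have h := Submodule.reflection_sub (v := ‖v‖⁻¹ • v) (w := -(‖v'‖⁻¹ • v'))
      (by rw [norm_neg, norm_smul, norm_smul, norm_inv, norm_inv, norm_norm, norm_norm,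
        inv_mul_cancel₀ hn, inv_mul_cancel₀ hn'])
    rw [sub_neg_eq_add, Submodule.reflection_orthogonal_apply] at h
    exact neg_injective h
  rw [map_smul] at h2
  rw [rot, LinearIsometryEquiv.trans_apply, h1, div_eq_mul_inv, mul_smul, h2, smul_smul,
    mul_inv_cancel₀ hn', one_smul]

lemma rot_self {d : ℕ} {v : Euc d} (hv : v ≠ 0) (z : Euc d) : rot v v z = z := by
  have hn : ‖v‖ ≠ 0 := norm_ne_zero_iff.2 hv
  have h : (ℝ ∙ (‖v‖⁻¹ • v + ‖v‖⁻¹ • v)) = (ℝ ∙ v) := by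
    rw [← add_smul]
    exact Submodule.span_singleton_smul_eq (IsUnit.mk0 _ (by positivity)) v
  rw [rot, LinearIsometryEquiv.trans_apply]
  simp only [h]
  exact Submodule.reflection_reflection _ z

lemma rot_apply {d : ℕ} (v v' z : Euc d) : rot v v' z =
    (2 : ℝ) • (⟪‖v‖⁻¹ • v + ‖v'‖⁻¹ • v', (ℝ ∙ v).reflection z⟫ /
      ‖‖v‖⁻¹ • v + ‖v'‖⁻¹ • v'‖ ^ 2) • (‖v‖⁻¹ • v + ‖v'‖⁻¹ • v') - (ℝ ∙ v).reflection z := by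
  rw [rot, LinearIsometryEquiv.trans_apply, Submodule.reflection_singleton_apply,
    ← Nat.cast_smul_eq_nsmul ℝ]
  rfl

attribute [irreducible] rot

lemma rot_continuousAt {d : ℕ} {X : Type*} [TopologicalSpace X] {v : Euc d} (hv : v ≠ 0)
    {p q : X → Euc d} {a : X} (hpa : p a = v) (hp : ContinuousAt p a) (hq : ContinuousAt q a) :
    ContinuousAt (fun y => rot v (p y) (q y)) a := by
  have hn : ‖p a‖ ≠ 0 := by rw [hpa]; exact norm_ne_zero_iff.2 hv
  simp only [rot_apply]
  have hw : ContinuousAt (fun y => ‖v‖⁻¹ • v + ‖p y‖⁻¹ • p y) a :=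
    continuousAt_const.add ((hp.norm.inv₀ hn).smul hp)
  have hw0 : ‖v‖⁻¹ • v + ‖v‖⁻¹ • v ≠ 0 := by
    rw [← add_smul]
    rw [hpa] at hn
    exact smul_ne_zero (by positivity) hv
  have hr : ContinuousAt (fun y => (ℝ ∙ v).reflection (q y)) a :=
    (ℝ ∙ v).reflection.continuous.continuousAt.comp hq
  have hin := (ContinuousAt.inner (𝕜 := ℝ) hw hr).div (hw.norm.pow 2) (by
    rw [Pi.pow_apply, hpa]
    exact pow_ne_zero _ (norm_ne_zero_iff.2 hw0))
  exact ((hin.smul hw).const_smul (2 : ℝ)).sub hr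

/-- A closed disk `F` in `D`, moved by the similarity carrying `(x, v)` to a nearby `(x', v')`,
stays in `D` since its image is a compact subset of `D`. -/
lemma eventually_moved_disk_subset {d : ℕ} {D : Set (Euc d)} (hD : IsOpen D) {x v : Euc d}
    (hv : v ≠ 0) {F : Euc 2 → Euc d} (hF : ∀ z ∈ closedBall (0 : Euc 2) 1, ContinuousAt F z)
    (hFD : ∀ z ∈ closedBall (0 : Euc 2) 1, F z ∈ D) :
    ∀ᶠ p : Euc d × Euc d in nhds (x, v), ∀ z ∈ closedBall (0 : Euc 2) 1,
        p.1 + (‖p.2‖ / ‖v‖) • rot v p.2 (F z - x) ∈ D := by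
  refine (isCompact_closedBall (0 : Euc 2) 1).eventually_forall_of_forall_eventually ?_
  intro z hz
  have h1 : ContinuousAt (fun q : (Euc d × Euc d) × Euc 2 => q.1.1) ((x, v), z) :=
    (continuous_fst.comp continuous_fst).continuousAt
  have h2 : ContinuousAt (fun q : (Euc d × Euc d) × Euc 2 => q.1.2) ((x, v), z) :=
    (continuous_snd.comp continuous_fst).continuousAt
  have h3 : ContinuousAt (fun q : (Euc d × Euc d) × Euc 2 => F q.2) ((x, v), z) :=
    ContinuousAt.comp (f := fun q : (Euc d × Euc d) × Euc 2 => q.2) (hF z hz)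
      continuous_snd.continuousAt
  have hrot := rot_continuousAt hv rfl h2 (h3.sub (continuousAt_const (y := x)))
  have htot := h1.add ((h2.norm.div_const ‖v‖).smul hrot)
  refine htot.eventually_mem (hD.mem_nhds ?_)
  change x + (‖v‖ / ‖v‖) • rot v v (F z - x) ∈ D
  rw [rot_self hv, div_self (norm_ne_zero_iff.2 hv), one_smul, add_sub_cancel]
  exact hFD z hz

/-- Upper semicontinuity of the minimal metric: a disk competing at `(x, v)`, slightly shrunk, is
carried by a similarity to a disk competing at any nearby `(x', v')`; for `v = 0` small flat disks
suffice. -/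
lemma isOpen_minMetric_lt {d : ℕ} (hd : 3 ≤ d) {D : Set (Euc d)} (hD : IsOpen D) (a : ℝ) :
    IsOpen {p : Euc d × Euc d | p.1 ∈ D ∧ minMetric D p.1 p.2 < a} := by
  rw [isOpen_iff_mem_nhds]
  rintro ⟨x, v⟩ ⟨hx, ha⟩
  simp only at hx ha
  by_cases hv : v = 0
  · subst hv
    have ha0 : 0 < a := (minMetric_nonneg _ _ _).trans_lt ha
    obtain ⟨δ, hδ, hB⟩ := Metric.isOpen_iff.1 hD x hx
    have h1 : ball x (δ / 2) ×ˢ ball (0 : Euc d) (a * (δ / 2)) ∈ nhds (x, (0 : Euc d)) :=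
      prod_mem_nhds (ball_mem_nhds _ (by positivity)) (ball_mem_nhds _ (by positivity))
    filter_upwards [h1]
    rintro ⟨x', v'⟩ ⟨hx', hv'⟩
    simp only [mem_ball, dist_zero_right] at hx' hv'
    have hB' : ball x' (δ / 2) ⊆ D := (ball_subset_ball' (by linarith)).trans hB
    refine ⟨hB' (mem_ball_self (by positivity)), ?_⟩
    refine (minMetric_le_of_ball hd v' (by positivity) hB').trans_lt ?_
    rwa [div_lt_iff₀ (by positivity)]
  · obtain ⟨_, ⟨r, hr, rfl, f, hf, hfD, hf0, hpd⟩, hra⟩ :=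
      exists_lt_of_csInf_lt (minSet_nonempty hd hD hx v) ha
    obtain ⟨ρ, hρ, hρ1, hρa⟩ : ∃ ρ : ℝ, 0 < ρ ∧ ρ < 1 ∧ 1 / (ρ * r) < a := by
      have ha0 : 0 < a := lt_trans (by positivity) hra
      have h1 : 1 / (a * r) < 1 := by
        rw [div_lt_one (by positivity)]
        rw [div_lt_iff₀ hr] at hra
        exact hra
      obtain ⟨ρ, h2, h3⟩ := exists_between h1
      have hρ : 0 < ρ := lt_trans (by positivity) h2
      refine ⟨ρ, hρ, h3, ?_⟩
      rw [div_lt_iff₀ (by positivity)] at h2 ⊢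
      linarith
    have hsub : ∀ z ∈ closedBall (0 : Euc 2) 1, ρ • z ∈ unitDisk := by
      intro z hz
      simp only [unitDisk, mem_ball_zero_iff, mem_closedBall_zero_iff, norm_smul,
        Real.norm_eq_abs, abs_of_pos hρ] at hz ⊢
      nlinarith [norm_nonneg z]
    have hev : ∀ᶠ p : Euc d × Euc d in nhds (x, v), ∀ z ∈ closedBall (0 : Euc 2) 1,
        p.1 + (‖p.2‖ / ‖v‖) • rot v p.2 (f (ρ • z) - x) ∈ D := by
      refine eventually_moved_disk_subset hD hv (F := fun z => f (ρ • z)) (fun z hz => ?_)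
        (fun z hz => hfD _ (hsub z hz))
      exact ContinuousAt.comp (f := fun z : Euc 2 => ρ • z)
        (hf.1.contDiffAt (isOpen_unitDisk.mem_nhds (hsub z hz))).continuousAt
        (continuous_const_smul ρ).continuousAt
    have hxev : ∀ᶠ p : Euc d × Euc d in nhds (x, v), p.1 ∈ D :=
      continuousAt_fst.eventually_mem (hD.mem_nhds hx)
    have hvev : ∀ᶠ p : Euc d × Euc d in nhds (x, v), p.2 ≠ 0 :=
      continuousAt_snd.eventually_ne hv
    filter_upwards [hev, hxev, hvev]
    rintro ⟨x', v'⟩ h1 h2 h3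
    refine ⟨h2, lt_of_le_of_lt (minMetric_le ?_) hρa⟩
    obtain ⟨hc, hp⟩ := conformalHarmonic_similarity hf hρ hρ1.le (‖v'‖ / ‖v‖) (rot v v') x x'
    refine ⟨ρ * r, by positivity, rfl, _, hc, fun z hz => h1 z (ball_subset_closedBall hz), ?_, ?_⟩
    · simp [hf0]
    · rw [hp, hpd, map_smul, mul_smul, smul_comm _ r, rot_apply_self hv h3, mul_smul]

/-! ### Minimal length of curves -/

/-- A piecewise `C¹` curve is differentiable with bounded derivative off a finite set. -/
lemma PiecewiseC1On.exists_finite_bound {d : ℕ} {γ : ℝ → Euc d} {a b : ℝ}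
    (h : PiecewiseC1On γ a b) :
    ∃ (s : Set ℝ) (M : ℝ), s.Finite ∧
      ∀ u ∈ Icc a b, u ∉ s → DifferentiableAt ℝ γ u ∧ ‖deriv γ u‖ ≤ M := by
  obtain ⟨-, n, t, -, ht0, ht1, hC⟩ := h
  have hM : ∀ i : Fin (n + 1), ∃ M : ℝ, ∀ u ∈ Ioo (t i.castSucc) (t i.succ),
      DifferentiableAt ℝ γ u ∧ ‖deriv γ u‖ ≤ M := by
    intro i
    rcases lt_or_ge (t i.castSucc) (t i.succ) with hlt | hge
    · have hc := (hC i).continuousOn_derivWithin (uniqueDiffOn_Icc hlt) le_rfl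
      obtain ⟨M, hM⟩ := isCompact_Icc.exists_bound_of_continuousOn hc
      refine ⟨M, fun u hu => ?_⟩
      have hn : Icc (t i.castSucc) (t i.succ) ∈ nhds u := Icc_mem_nhds hu.1 hu.2
      refine ⟨((hC i).differentiableOn (by norm_num)).differentiableAt hn, ?_⟩
      rw [← derivWithin_of_mem_nhds hn]
      exact hM u (Ioo_subset_Icc_self hu)
    · exact ⟨0, fun u hu => absurd (hu.1.trans hu.2) hge.not_gt⟩
  choose M hM using hM
  obtain ⟨B, hB⟩ := (Set.finite_range M).bddAbove
  refine ⟨range t, B, Set.finite_range t, fun u hu hut => ?_⟩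
  have hne : ∀ i, t i ≠ u := fun i hi => hut ⟨i, hi⟩
  -- If no open piece contained `u`, every breakpoint, including the last one, would lie before `u`.
  obtain ⟨i, hi⟩ : ∃ i : Fin (n + 1), u ∈ Ioo (t i.castSucc) (t i.succ) := by
    by_contra! hcon
    have hall : ∀ i, t i < u := by
      intro i
      induction i using Fin.induction with
      | zero => exact lt_of_le_of_ne (ht0 ▸ hu.1) (hne 0)
      | succ i ih =>
        refine lt_of_le_of_ne ?_ (hne _)
        by_contra! hlt
        exact hcon i ⟨ih, hlt⟩
    exact absurd (hall (Fin.last (n + 1))) (by rw [ht1]; exact hu.2.not_gt)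
  exact ⟨(hM i u hi).1, (hM i u hi).2.trans (hB ⟨i, rfl⟩)⟩

open Classical in
/-- Borel measurability of the minimal metric, extended by zero outside `D`, from upper
semicontinuity. -/
lemma measurable_minMetric {d : ℕ} (hd : 3 ≤ d) {D : Set (Euc d)} (hD : IsOpen D) :
    Measurable (fun p : Euc d × Euc d => if p.1 ∈ D then minMetric D p.1 p.2 else 0) := by
  refine measurable_of_Iio fun a => ?_
  have hDm : MeasurableSet {p : Euc d × Euc d | p.1 ∉ D ∧ 0 < a} :=
    (measurable_fst hD.measurableSet).compl.inter (MeasurableSet.const _)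
  have heq : (fun p : Euc d × Euc d => if p.1 ∈ D then minMetric D p.1 p.2 else 0) ⁻¹' Iio a
      = {p | p.1 ∈ D ∧ minMetric D p.1 p.2 < a} ∪ {p | p.1 ∉ D ∧ 0 < a} := by
    ext p
    by_cases hp : p.1 ∈ D <;> simp [hp]
  rw [heq]
  exact (isOpen_minMetric_lt hd hD a).measurableSet.union hDm

/-- The integral defining the minimal length of a piecewise `C¹` curve in `D` converges, so it does
not take the junk value `0`. -/
lemma intervalIntegrable_minMetric {d : ℕ} (hd : 3 ≤ d) {D : Set (Euc d)} (hD : IsOpen D)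
    {γ : ℝ → Euc d} (hγ : PiecewiseC1On γ 0 1) (hγD : ∀ t ∈ Icc (0 : ℝ) 1, γ t ∈ D) :
    IntervalIntegrable (fun t => minMetric D (γ t) (deriv γ t)) MeasureTheory.volume 0 1 := by
  classical
  obtain ⟨s, M, hs, hM⟩ := hγ.exists_finite_bound
  obtain ⟨δ, hδ, hth⟩ := (isCompact_Icc.image_of_continuousOn hγ.1).exists_thickening_subset_open hD
    (by rintro _ ⟨t, ht, rfl⟩; exact hγD t ht)
  rw [intervalIntegrable_iff_integrableOn_Icc_of_le zero_le_one]
  refine MeasureTheory.Integrable.mono' (MeasureTheory.integrable_const (M / δ)) ?_ ?_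
  · have h1 : AEMeasurable γ (MeasureTheory.volume.restrict (Icc (0 : ℝ) 1)) :=
      hγ.1.aemeasurable measurableSet_Icc
    have h2 := (measurable_minMetric hd hD).comp_aemeasurable
      (h1.prodMk (measurable_deriv γ).aemeasurable)
    refine (h2.congr ?_).aestronglyMeasurable
    filter_upwards [MeasureTheory.ae_restrict_mem measurableSet_Icc] with t ht
    simp [hγD t ht]
  · have hs0 : ∀ᵐ t ∂(MeasureTheory.volume.restrict (Icc (0 : ℝ) 1)), t ∉ s :=
      MeasureTheory.ae_restrict_of_ae (hs.countable.ae_notMem _)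
    filter_upwards [MeasureTheory.ae_restrict_mem measurableSet_Icc, hs0] with t ht hts
    rw [Real.norm_eq_abs, abs_of_nonneg (minMetric_nonneg _ _ _)]
    have hB : ball (γ t) δ ⊆ D := (ball_subset_thickening (mem_image_of_mem γ ht) δ).trans hth
    refine (minMetric_le_of_ball hd _ hδ hB).trans ?_
    gcongr
    exact (hM t ht hts).2

/-- Integrated half-space bound: the logarithmic distance to the hyperplane `{l = c}` varies along a
curve in `D ⊆ {l < c}` by at most twice the minimal length of the curve. -/
lemma abs_log_sub_log_le {d : ℕ} (hd : 3 ≤ d) {D : Set (Euc d)} (hD : IsOpen D)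
    {γ : ℝ → Euc d} (hγ : PiecewiseC1On γ 0 1) (hγD : ∀ t ∈ Icc (0 : ℝ) 1, γ t ∈ D)
    (l : Euc d →L[ℝ] ℝ) (c : ℝ) (hlt : ∀ z ∈ D, l z < c) :
    |Real.log (c - l (γ 1)) - Real.log (c - l (γ 0))| ≤
      2 * ∫ t in (0 : ℝ)..1, minMetric D (γ t) (deriv γ t) := by
  obtain ⟨s, M, hs, hM⟩ := hγ.exists_finite_bound
  have hg := intervalIntegrable_minMetric hd hD hγ hγD
  have hpos : ∀ t ∈ Icc (0 : ℝ) 1, 0 < c - l (γ t) := fun t ht => by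
    linarith [hlt _ (hγD t ht)]
  have hcont : ContinuousOn (fun t => c - l (γ t)) (Icc 0 1) :=
    continuousOn_const.sub (l.continuous.comp_continuousOn hγ.1)
  have hbound : ∀ t ∈ Icc (0 : ℝ) 1, ‖-l (deriv γ t) / (c - l (γ t))‖ ≤
      2 * minMetric D (γ t) (deriv γ t) := by
    intro t ht
    have h := abs_le_minMetric hd hD (hγD t ht) (deriv γ t) l c hlt
    rw [norm_div, norm_neg, Real.norm_eq_abs, Real.norm_eq_abs, abs_of_pos (hpos t ht),
      div_le_iff₀ (hpos t ht)]
    linarith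
  have hg2 := hg.const_mul 2
  have hInt : IntervalIntegrable (fun t => -l (deriv γ t) / (c - l (γ t)))
      MeasureTheory.volume 0 1 := by
    rw [intervalIntegrable_iff_integrableOn_Icc_of_le zero_le_one] at hg2 ⊢
    refine MeasureTheory.Integrable.mono' hg2 ?_ ?_
    · have h1 : AEMeasurable (fun t => c - l (γ t))
          (MeasureTheory.volume.restrict (Icc (0 : ℝ) 1)) :=
        hcont.aemeasurable measurableSet_Icc
      have h2 : Measurable (fun t => -l (deriv γ t)) :=
        (l.measurable.comp (measurable_deriv γ)).neg
      exact (h2.aemeasurable.div h1).aestronglyMeasurable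
    · filter_upwards [MeasureTheory.ae_restrict_mem measurableSet_Icc] with t ht
      exact hbound t ht
  have hFTC := MeasureTheory.integral_eq_of_hasDerivAt_off_countable_of_le
    (fun t => Real.log (c - l (γ t))) (fun t => -l (deriv γ t) / (c - l (γ t)))
    zero_le_one hs.countable (hcont.log fun t ht => (hpos t ht).ne')
    (fun t ht => by
      have htI := Ioo_subset_Icc_self ht.1
      have h1 := (hM t htI ht.2).1.hasDerivAt
      have h2 : HasDerivAt (fun t => l (γ t)) (l (deriv γ t)) t :=
        l.hasFDerivAt.comp_hasDerivAt t h1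
      exact (h2.const_sub c).log (hpos t htI).ne')
    hInt
  rw [← hFTC, ← intervalIntegral.integral_const_mul, ← Real.norm_eq_abs]
  refine intervalIntegral.norm_integral_le_of_norm_le zero_le_one ?_ hg2
  exact Filter.Eventually.of_forall fun t ht => hbound t (Ioc_subset_Icc_self ht)

/-! ### Chords and the Hilbert distance -/

/-- Supporting half-space at a finite chord endpoint. -/
lemma exists_support {d : ℕ} {D : Set (Euc d)} (hD : IsOpen D) (hConv : Convex ℝ D) {x : Euc d}
    (hx : x ∈ D) {v : Euc d} (hs : chordParam D x v ≠ 0) :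
    0 < chordParam D x v ∧ ∃ l : Euc d →L[ℝ] ℝ, 0 < l v ∧
      ∀ z ∈ D, l z < l x + chordParam D x v * l v := by
  have hne : {s : ℝ | 0 < s ∧ x + s • v ∉ D}.Nonempty := by
    by_contra h
    exact hs (by rw [chordParam, not_nonempty_iff_eq_empty.1 h, Real.sInf_empty])
  -- Since `x ∈ D`, the strict inequality may be relaxed, which makes the set visibly closed.
  have heq : {s : ℝ | 0 < s ∧ x + s • v ∉ D} = Ici 0 ∩ (fun s : ℝ => x + s • v) ⁻¹' Dᶜ := by
    ext s
    simp only [mem_ofPred_eq, mem_inter_iff, mem_Ici, mem_preimage, mem_compl_iff]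
    refine ⟨fun h => ⟨h.1.le, h.2⟩, fun h => ⟨lt_of_le_of_ne h.1 ?_, h.2⟩⟩
    rintro rfl
    exact h.2 (by simpa using hx)
  have hcl : IsClosed {s : ℝ | 0 < s ∧ x + s • v ∉ D} := by
    rw [heq]
    exact isClosed_Ici.inter (hD.isClosed_compl.preimage (by fun_prop))
  have hmem : 0 < chordParam D x v ∧ x + chordParam D x v • v ∉ D :=
    hcl.csInf_mem hne ⟨0, fun s hs => hs.1.le⟩
  obtain ⟨l, hl⟩ := geometric_hahn_banach_open_point hConv hD hmem.2
  have hl' : ∀ z ∈ D, l z < l x + chordParam D x v * l v := fun z hz => by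
    simpa using hl z hz
  refine ⟨hmem.1, l, ?_, hl'⟩
  have := hl' x hx
  exact pos_of_mul_pos_right (by linarith) hmem.1.le

/-- Both orientations of the chord are bounded by the metric in the one direction `v`. When the ray
stays in `D`, `chordParam` is `0` and so is the left-hand side. -/
lemma one_div_chordParam_le {d : ℕ} (hd : 3 ≤ d) {D : Set (Euc d)} (hD : IsOpen D)
    (hConv : Convex ℝ D) {x : Euc d} (hx : x ∈ D) {v w : Euc d} (hw : w = v ∨ w = -v) :
    1 / chordParam D x w ≤ 2 * minMetric D x v := by
  by_cases hs : chordParam D x w = 0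
  · rw [hs, div_zero]
    linarith [minMetric_nonneg D x v]
  · obtain ⟨hpos, l, hlw, hl⟩ := exists_support hD hConv hx hs
    have h := abs_le_minMetric hd hD hx v l _ hl
    have habs : |l v| = l w := by
      rw [← abs_of_pos hlw]
      rcases hw with rfl | rfl <;> simp
    rw [habs, add_sub_cancel_left] at h
    rw [div_le_iff₀ hpos]
    have h2 : l w * 1 ≤ l w * (2 * minMetric D x v * chordParam D x w) := by linarith
    exact le_of_mul_le_mul_left h2 hlw

/-- The integrated half-space bound, applied to the supporting half-spaces at the two ends of the
chord, bounds each of the two logarithms whose half-sum is the Hilbert distance. -/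
lemma hilbertDist_le_of_curve {d : ℕ} (hd : 3 ≤ d) {D : Set (Euc d)} (hD : IsOpen D)
    (hConv : Convex ℝ D) {γ : ℝ → Euc d} (hγ : PiecewiseC1On γ 0 1)
    (hγD : ∀ t ∈ Icc (0 : ℝ) 1, γ t ∈ D) :
    hilbertDist D (γ 0) (γ 1) ≤ 2 * ∫ t in (0 : ℝ)..1, minMetric D (γ t) (deriv γ t) := by
  classical
  have hI : 0 ≤ ∫ t in (0 : ℝ)..1, minMetric D (γ t) (deriv γ t) :=
    intervalIntegral.integral_nonneg zero_le_one fun t _ => minMetric_nonneg _ _ _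
  have hx : γ 0 ∈ D := hγD 0 (by simp)
  have hy : γ 1 ∈ D := hγD 1 (by simp)
  have key := abs_log_sub_log_le hd hD hγ hγD
  generalize (∫ t in (0 : ℝ)..1, minMetric D (γ t) (deriv γ t)) = I at *
  generalize γ 0 = x at *
  generalize γ 1 = y at *
  -- Each of the two ratios in the cross-ratio is controlled by one supporting half-space.
  have hb : ∀ A, A = (if chordParam D x (y - x) = 0 then 1
        else chordParam D x (y - x) / (chordParam D x (y - x) - 1)) →
      0 < A ∧ Real.log A ≤ 2 * I := by
    rintro A rfl
    split_ifs with h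
    · simpa using hI
    · obtain ⟨hs, l, hlv, hl⟩ := exists_support hD hConv hx h
      have hk := key l _ hl
      generalize chordParam D x (y - x) = s at *
      have hly : l y = l x + l (y - x) := by simp
      have hs1 : 0 < s - 1 := by
        have h1 := hl y hy
        rw [hly] at h1
        refine pos_of_mul_pos_left (b := l (y - x)) (by linarith) hlv.le
      refine ⟨by positivity, ?_⟩
      have e1 : l x + s * l (y - x) - l y = (s - 1) * l (y - x) := by rw [hly]; ring
      rw [e1, add_sub_cancel_left, Real.log_mul hs1.ne' hlv.ne', Real.log_mul hs.ne' hlv.ne'] at hk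
      rw [Real.log_div hs.ne' hs1.ne']
      linarith [neg_abs_le (Real.log (s - 1) + Real.log (l (y - x)) -
        (Real.log s + Real.log (l (y - x))))]
  have ha : ∀ B, B = (if chordParam D x (x - y) = 0 then 1
        else (1 + chordParam D x (x - y)) / chordParam D x (x - y)) →
      0 < B ∧ Real.log B ≤ 2 * I := by
    rintro B rfl
    split_ifs with h
    · simpa using hI
    · obtain ⟨hs, l, hlv, hl⟩ := exists_support hD hConv hx h
      have hk := key l _ hl
      generalize chordParam D x (x - y) = s at *
      have hly : l y = l x - l (x - y) := by simp
      have hs1 : 0 < 1 + s := by positivity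
      refine ⟨by positivity, ?_⟩
      have e1 : l x + s * l (x - y) - l y = (1 + s) * l (x - y) := by rw [hly]; ring
      rw [e1, add_sub_cancel_left, Real.log_mul hs1.ne' hlv.ne', Real.log_mul hs.ne' hlv.ne'] at hk
      rw [Real.log_div hs1.ne' hs.ne']
      linarith [le_abs_self (Real.log (1 + s) + Real.log (l (x - y)) -
        (Real.log s + Real.log (l (x - y))))]
  rw [hilbertDist]
  by_cases hxy : x = y
  · rw [if_pos hxy]
    linarith
  · rw [if_neg hxy]
    obtain ⟨hA, hA'⟩ := hb _ rfl
    obtain ⟨hB, hB'⟩ := ha _ rfl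
    rw [Real.log_mul hA.ne' hB.ne']
    linarith

lemma exists_curve {d : ℕ} {D : Set (Euc d)} (hConv : Convex ℝ D) {x y : Euc d} (hx : x ∈ D)
    (hy : y ∈ D) : ∃ γ : ℝ → Euc d, PiecewiseC1On γ 0 1 ∧
      (∀ t ∈ Icc (0 : ℝ) 1, γ t ∈ D) ∧ γ 0 = x ∧ γ 1 = y := by
  have hs : ContDiff ℝ 1 (fun t : ℝ => x + t • (y - x)) := by fun_prop
  refine ⟨fun t => x + t • (y - x), ⟨hs.continuous.continuousOn, 0, ![0, 1], ?_, rfl, rfl,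
    fun i => hs.contDiffOn⟩, fun t ht => hConv.add_smul_sub_mem hx hy ht, by simp, by simp⟩
  intro i j hij
  fin_cases i <;> fin_cases j <;> simp_all

/-- In any convex domain `D ⊆ ℝ^d` (`d ≥ 3`) the Hilbert metric is
dominated by twice the minimal metric, both infinitesimally and at the distance level. -/
theorem hilbert_le_two_mul_minimal
    (d : ℕ) (hd : 3 ≤ d) (D : Set (Euc d))
    (hOpen : IsOpen D) (hConn : IsConnected D) (hConv : Convex ℝ D) :
    (∀ x ∈ D, ∀ v : Euc d, hilbertFinsler D x v ≤ 2 * minMetric D x v) ∧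
    (∀ x ∈ D, ∀ y ∈ D, hilbertDist D x y ≤ 2 * minDist D x y) := by
  refine ⟨fun x hx v => ?_, fun x hx y hy => ?_⟩
  · have h1 := one_div_chordParam_le hd hOpen hConv hx (v := v) (Or.inl rfl)
    have h2 := one_div_chordParam_le hd hOpen hConv hx (v := v) (Or.inr rfl)
    rw [hilbertFinsler]
    linarith
  · rw [← div_le_iff₀' two_pos]
    obtain ⟨γ₀, h1, h2, h3, h4⟩ := exists_curve hConv hx hy
    refine le_csInf ⟨_, γ₀, h1, h2, h3, h4, rfl⟩ ?_
    rintro _ ⟨γ, hγ, hγD, rfl, rfl, rfl⟩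
    rw [div_le_iff₀' two_pos]
    exact hilbertDist_le_of_curve hd hOpen hConv hγ hγD
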